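/- Let f be a continuous function on the unit circle bΔ. If for every polynomial P such that f + P is nonvanishing on bΔ, the winding number of f + P around 0 is nonnegative, then f extends continuously to the closed unit disc so as to be holomorphic on the open unit disc. -/

import Mathlib

open Polynomial Metric
open scoped Classical

/-- `g` (restricted to the unit circle) has winding number `n` around `0`:
there is a continuous argument lift `α` along `θ ↦ g (exp (iθ))` whose total
increase over `[0, 2π]` is `2πn`. -/
def HasWindingNumber (g : ℂ → ℂ) (n : ℤ) : Prop :=
  ∃ α : ℝ → ℝ, Continuous α ∧
    (∀ θ : ℝ, g (Complex.exp (θ * Complex.I)) =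
      (‖g (Complex.exp (θ * Complex.I))‖ : ℂ) * Complex.exp (α θ * Complex.I)) ∧
    α (2 * Real.pi) - α 0 = n * (2 * Real.pi)

/-- `f` on the unit circle extends continuously to the closed unit disc,
holomorphically on the open unit disc. -/
def ExtendsHolo (f : ℂ → ℂ) : Prop :=
  ∃ F : ℂ → ℂ, ContinuousOn F (closedBall 0 1) ∧
    DifferentiableOn ℂ F (ball 0 1) ∧ ∀ z ∈ sphere (0:ℂ) 1, F z = f z

/-- Multiplicity of a zero of a (holomorphic) function: least `n` with
nonvanishing `n`-th derivative. -/
noncomputable def holoOrder (f : ℂ → ℂ) (z : ℂ) : ℕ :=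
  sInf {n | iteratedDeriv n f z ≠ 0}

/-- A continuous function on the unit circle is a uniform limit of trigonometric polynomials,
written as the sum of a polynomial and a conjugated polynomial. -/
theorem exists_polynomial_add_conj_near {f : ℂ → ℂ} (hf : ContinuousOn f (sphere (0:ℂ) 1))
    {ε : ℝ} (hε : 0 < ε) :
    ∃ p q : Polynomial ℂ, ∀ z ∈ sphere (0:ℂ) 1,
      ‖f z - (p.eval z + (starRingEnd ℂ) (q.eval z))‖ < ε := by
  have : Fact (0 < 2 * Real.pi) := ⟨Real.two_pi_pos⟩
  let G : C(AddCircle (2 * Real.pi), ℂ) :=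
    ⟨fun x => f (AddCircle.toCircle x),
      hf.comp_continuous (continuous_subtype_val.comp AddCircle.continuous_toCircle)
        (fun x => by rw [mem_sphere_zero_iff_norm]; exact Circle.norm_coe _)⟩
  have hG : G ∈ closure (Submodule.span ℂ (Set.range (@fourier (2 * Real.pi))) : Set _) := by
    have := span_fourier_closure_eq_top (T := 2 * Real.pi)
    rw [← Submodule.topologicalClosure_coe, this]
    trivial
  obtain ⟨g, hg, hdist⟩ := Metric.mem_closure_iff.1 hG ε hε
  have key : ∃ p q : Polynomial ℂ, ∀ x, g x = p.eval (AddCircle.toCircle x : ℂ)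
      + (starRingEnd ℂ) (q.eval (AddCircle.toCircle x : ℂ)) := by
    clear hdist
    induction hg using Submodule.span_induction with
    | mem x hx =>
      obtain ⟨n, rfl⟩ := hx
      obtain ⟨m, rfl | rfl⟩ := n.eq_nat_or_neg
      · refine ⟨X ^ m, 0, fun x => ?_⟩
        simp [fourier_apply, AddCircle.toCircle_nsmul]
      · refine ⟨0, X ^ m, fun x => ?_⟩
        rw [fourier_neg]
        simp [fourier_apply, AddCircle.toCircle_nsmul]
    | zero => exact ⟨0, 0, by simp⟩
    | add x y _ _ hx hy =>
      obtain ⟨p, q, h⟩ := hx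
      obtain ⟨p', q', h'⟩ := hy
      refine ⟨p + p', q + q', fun x => ?_⟩
      simp [h, h']
      ring
    | smul a x _ hx =>
      obtain ⟨p, q, h⟩ := hx
      refine ⟨C a * p, C ((starRingEnd ℂ) a) * q, fun x => ?_⟩
      simp [h]
      ring
  obtain ⟨p, q, h⟩ := key
  refine ⟨p, q, fun z hz => ?_⟩
  obtain ⟨x, hx⟩ := (AddCircle.homeomorphCircle Real.two_pi_pos.ne').surjective
    (⟨z, hz⟩ : Circle)
  rw [AddCircle.homeomorphCircle_apply] at hx
  have hxz : (AddCircle.toCircle x : ℂ) = z := by rw [hx]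
  have hx' := (ContinuousMap.dist_apply_le_dist (f := G) (g := g) x).trans_lt hdist
  rwa [dist_eq_norm, h, show G x = f (AddCircle.toCircle x) from rfl, hxz] at hx'

/-- If `b` and `c z b(z) g(z)` take values in the right half-plane, then `g` winds `-1` times. -/
theorem hasWindingNumber_neg_one {g b : ℂ → ℂ} {c : ℂ}
    (hg : ContinuousOn g (sphere (0:ℂ) 1)) (hb : ContinuousOn b (sphere (0:ℂ) 1))
    (hbpos : ∀ z ∈ sphere (0:ℂ) 1, 0 < (b z).re)
    (hpos : ∀ z ∈ sphere (0:ℂ) 1, 0 < (c * z * b z * g z).re) :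
    HasWindingNumber g (-1) := by
  have hmem : ∀ θ : ℝ, Complex.exp (θ * Complex.I) ∈ sphere (0:ℂ) 1 := fun θ => by simp
  have hexp : Continuous fun θ : ℝ => Complex.exp (θ * Complex.I) := by fun_prop
  have hgc := hg.comp_continuous hexp hmem
  have hbc := hb.comp_continuous hexp hmem
  let e : ℝ → ℂ := fun θ => Complex.exp (θ * Complex.I)
  let w : ℝ → ℂ := fun θ => c * e θ * b (e θ) * g (e θ)
  have hw : Continuous w := ((continuous_const.mul hexp).mul hbc).mul hgc
  have per : e (2 * Real.pi) = e 0 := by simp [e]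
  refine ⟨fun θ => (w θ).arg - θ - (b (e θ)).arg - c.arg, ?_, ?_, ?_⟩
  · have h1 : Continuous fun θ => (w θ).arg := continuous_iff_continuousAt.2 fun θ =>
      ContinuousAt.comp (f := w)
        (Complex.continuousAt_arg (Or.inl (hpos _ (hmem θ)))) hw.continuousAt
    have h2 : Continuous fun θ => (b (e θ)).arg := continuous_iff_continuousAt.2 fun θ =>
      ContinuousAt.comp
        (f := fun θ => b (e θ))
        (Complex.continuousAt_arg (Or.inl (hbpos _ (hmem θ)))) hbc.continuousAt
    fun_prop
  · intro θ
    change g (e θ) = (‖g (e θ)‖ : ℂ) * _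
    have hw0 : w θ ≠ 0 := fun h => by
      have := hpos _ (hmem θ)
      change 0 < (w θ).re at this
      simp [h] at this
    have hc0 : c ≠ 0 := by rintro rfl; simp [w] at hw0
    have hb0 : b (e θ) ≠ 0 := by intro h; simp [w, h] at hw0
    have hnorm : ‖w θ‖ = ‖c‖ * ‖b (e θ)‖ * ‖g (e θ)‖ := by
      simp only [w, norm_mul]
      rw [show ‖e θ‖ = 1 by simp [e]]
      ring
    have e1 := Complex.norm_mul_exp_arg_mul_I (w θ)
    have e2 := Complex.norm_mul_exp_arg_mul_I (b (e θ))
    have e3 := Complex.norm_mul_exp_arg_mul_I c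
    rw [hnorm] at e1
    have hE : c * e θ * b (e θ) ≠ 0 := by
      simp [hc0, hb0, e]
    apply mul_left_cancel₀ hE
    change w θ = _
    push_cast at e1 ⊢
    have : Complex.exp ((w θ).arg * Complex.I) = Complex.exp (c.arg * Complex.I) * e θ *
      Complex.exp ((b (e θ)).arg * Complex.I) *
        Complex.exp ((((w θ).arg : ℂ) - θ - (b (e θ)).arg - c.arg) * Complex.I) := by
      simp only [e, ← Complex.exp_add]
      congr 1
      ring
    rw [this] at e1
    linear_combination -e1 + ((‖g (e θ)‖ : ℂ) * e θ * Complex.exp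
      ((((w θ).arg : ℂ) - θ - (b (e θ)).arg - c.arg) * Complex.I)) *
        (Complex.exp (c.arg * Complex.I) * ‖c‖ * e2 + b (e θ) * e3)
  · simp only [w, per]
    push_cast
    ring

theorem norm_circleAverage_le_circleAverage_norm {E : Type*} [NormedAddCommGroup E]
    [NormedSpace ℝ E] (f : ℂ → E) (c : ℂ) (R : ℝ) :
    ‖Real.circleAverage f c R‖ ≤ Real.circleAverage (fun z => ‖f z‖) c R := by
  rw [Real.circleAverage, Real.circleAverage, norm_smul, smul_eq_mul, Real.norm_of_nonneg
    (by positivity)]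
  gcongr
  exact intervalIntegral.norm_integral_le_integral_norm (by positivity)

theorem norm_circleAverage_le_of_norm_le {E : Type*} [NormedAddCommGroup E]
    [NormedSpace ℝ E] {f : ℂ → E} {c : ℂ} {R C : ℝ} (hf : ContinuousOn f (sphere c |R|))
    (h : ∀ z ∈ sphere c |R|, ‖f z‖ ≤ C) :
    ‖Real.circleAverage f c R‖ ≤ C :=
  (norm_circleAverage_le_circleAverage_norm f c R).trans
    (Real.circleAverage_mono_on_of_le_circle hf.norm.circleIntegrable' h)

theorem circleAverage_polynomial (p : Polynomial ℂ) :
    Real.circleAverage (fun z => p.eval z) 0 1 = p.eval 0 :=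
  DiffContOnCl.circleAverage (f := fun z => p.eval z) p.differentiable.diffContOnCl

/-- `1 + a z ^ k` with `‖a‖ ≤ 1 / 2` can be inverted approximately by polynomials on the circle. -/
theorem exists_polynomial_approx_inv {a : ℂ} (ha : ‖a‖ ≤ 1 / 2) (k : ℕ) {δ : ℝ} (hδ : 0 < δ) :
    ∃ G : Polynomial ℂ, ∀ z ∈ sphere (0:ℂ) 1, ‖(1 + a * z ^ k) * G.eval z - 1‖ ≤ δ := by
  obtain ⟨N, hN⟩ := exists_pow_lt_of_lt_one hδ (show (1 / 2 : ℝ) < 1 by norm_num)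
  refine ⟨∑ j ∈ Finset.range N, (-(C a * X ^ k)) ^ j, fun z hz => ?_⟩
  have hz1 : ‖z‖ = 1 := by simpa using hz
  have h1 := mul_neg_geom_sum (-(a * z ^ k)) N
  rw [sub_neg_eq_add] at h1
  simp only [eval_finsetSum, eval_pow, eval_neg, eval_mul, eval_C, eval_X]
  rw [h1, show ∀ x : ℂ, 1 - x - 1 = -x by intro x; ring, norm_neg, norm_pow, norm_neg, norm_mul,
    norm_pow, hz1, one_pow, mul_one]
  exact (pow_le_pow_left₀ (norm_nonneg _) ha N).trans hN.le

theorem re_one_add_mul_pow_pos {a z : ℂ} (ha : ‖a‖ ≤ 1 / 2) (hz : z ∈ sphere (0:ℂ) 1) (k : ℕ) :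
    0 < (1 + a * z ^ k).re := by
  have hz1 : ‖z‖ = 1 := by simpa using hz
  have h := Complex.abs_re_le_norm (a * z ^ k)
  rw [norm_mul, norm_pow, hz1, one_pow, mul_one] at h
  have := neg_abs_le (a * z ^ k).re
  rw [Complex.add_re, Complex.one_re]
  linarith

/-- A nonzero moment of `f` against `z (1 + a z ^ k)` produces a polynomial `P` such that
`f + P` has winding number `-1`. -/
theorem exists_polynomial_hasWindingNumber_neg_one {f : ℂ → ℂ}
    (hf : ContinuousOn f (sphere (0:ℂ) 1)) {a : ℂ} (ha : ‖a‖ ≤ 1 / 2) (k : ℕ)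
    (hA : Real.circleAverage (fun z => z * (1 + a * z ^ k) * f z) 0 1 ≠ 0) :
    ∃ P : Polynomial ℂ, (∀ z ∈ sphere (0:ℂ) 1, f z + P.eval z ≠ 0) ∧
      HasWindingNumber (fun z => f z + P.eval z) (-1) := by
  set A := Real.circleAverage (fun z => z * (1 + a * z ^ k) * f z) 0 1 with hAdef
  set c := (starRingEnd ℂ) A with hc
  have hc0 : c ≠ 0 := by simpa [hc] using hA
  set h : ℂ → ℂ := fun z => c * (z * (1 + a * z ^ k) * f z) with hh
  have hcont : ContinuousOn h (sphere (0:ℂ) 1) := by fun_prop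
  set m : ℝ := ‖A‖ ^ 2 with hm
  have hmpos : 0 < m := by positivity
  have havg : Real.circleAverage h 0 1 = (m : ℂ) := by
    have := Real.circleAverage_fun_smul (a := c) (c := 0) (R := 1)
      (f := fun z => z * (1 + a * z ^ k) * f z)
    simp only [smul_eq_mul] at this
    rw [hh, this, ← hAdef, hc, mul_comm, Complex.mul_conj, Complex.normSq_eq_norm_sq]
  obtain ⟨p, q, hpq⟩ := exists_polynomial_add_conj_near hcont (show 0 < m / 4 by positivity)
  set S := p + q with hS
  have hSre : ∀ z ∈ sphere (0:ℂ) 1, |(h z - S.eval z).re| ≤ m / 4 := fun z hz => by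
    have h1 := (Complex.abs_re_le_norm _).trans (hpq z hz).le
    simpa [hS] using h1
  have hS0 : |m - (S.eval 0).re| ≤ m / 4 := by
    have hcI : ∀ {u : ℂ → ℂ}, ContinuousOn u (sphere (0:ℂ) 1) → CircleIntegrable u 0 1 :=
      fun hu => hu.circleIntegrable zero_le_one
    have hSc : ContinuousOn (fun z => S.eval z) (sphere (0:ℂ) 1) := S.continuous.continuousOn
    have h1 : Real.circleAverage (fun z => h z - S.eval z) 0 1 = m - S.eval 0 := by
      rw [Real.circleAverage_fun_sub (hcI hcont) (hcI hSc), havg, circleAverage_polynomial]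
    have h2 := Complex.reCLM.circleAverage_comp_comm (hcI (hcont.sub hSc))
    have h3 : Complex.reCLM (Real.circleAverage (h - fun z => S.eval z) 0 1)
        = m - (S.eval 0).re := by
      rw [show (h - fun z => S.eval z) = fun z => h z - S.eval z from rfl, h1]
      simp
    rw [← h3, ← h2, ← Real.norm_eq_abs]
    refine norm_circleAverage_le_of_norm_le ?_ ?_
    · rw [abs_one]
      exact Complex.continuous_re.comp_continuousOn (hcont.sub hSc)
    · rw [abs_one]
      exact hSre
  set R := S.divX with hR
  have hRS : ∀ z, S.eval z = z * R.eval z + S.eval 0 := fun z => by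
    conv_lhs => rw [← S.X_mul_divX_add]
    simp [hR, coeff_zero_eq_eval_zero]
  obtain ⟨M, hM⟩ := (isCompact_sphere (0:ℂ) 1).exists_bound_of_continuousOn
    (f := fun z => R.eval z) R.continuous.continuousOn
  have hM0 : 0 ≤ M := (norm_nonneg _).trans (hM 1 (by simp))
  obtain ⟨G, hG⟩ := exists_polynomial_approx_inv ha k
    (show 0 < m / (4 * (M + 1)) by positivity)
  set P : Polynomial ℂ := -(C c⁻¹ * R * G) with hP
  have hpos : ∀ z ∈ sphere (0:ℂ) 1, 0 < (c * z * (1 + a * z ^ k) * (f z + P.eval z)).re := by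
    intro z hz
    have hz1 : ‖z‖ = 1 := by simpa using hz
    have e1 : c * z * (1 + a * z ^ k) * (f z + P.eval z) = (h z - S.eval z) + S.eval 0
        - z * R.eval z * ((1 + a * z ^ k) * G.eval z - 1) := by
      rw [hRS z]
      simp only [hP, hh, eval_neg, eval_mul, eval_C]
      field_simp
      ring
    have e2 : ‖z * R.eval z * ((1 + a * z ^ k) * G.eval z - 1)‖ ≤ m / 4 := by
      rw [norm_mul, norm_mul, hz1, one_mul]
      calc _ ≤ M * (m / (4 * (M + 1))) := by
            gcongr
            · exact hM z hz
            · exact hG z hz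
        _ ≤ (M + 1) * (m / (4 * (M + 1))) := by gcongr; linarith
        _ = m / 4 := by field_simp
    have e3 := (Complex.abs_re_le_norm _).trans e2
    have e4 := hSre z hz
    rw [e1, Complex.sub_re, Complex.add_re]
    rw [abs_le] at e3 e4 hS0
    linarith [e3.2, e4.1, hS0.2]
  refine ⟨P, fun z hz h0 => ?_, ?_⟩
  · have := hpos z hz
    simp [h0] at this
  · exact hasWindingNumber_neg_one (b := fun z => 1 + a * z ^ k) (c := c)
      (hf.add P.continuous.continuousOn) (by fun_prop)
      (fun z hz => re_one_add_mul_pow_pos ha hz k) hpos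

theorem continuousOn_poissonKernel {w : ℂ} (hw : w ∈ ball (0:ℂ) 1) :
    ContinuousOn (poissonKernel 0 w) (sphere (0:ℂ) 1) := by
  rw [poissonKernel_eq_re_herglotzRieszKernel]
  have := continuousOn_herglotzRieszKernel_sphere hw
  rw [abs_one] at this
  exact Complex.continuous_re.comp_continuousOn this

/-- The Poisson integral does not increase the supremum norm. -/
theorem norm_circleAverage_poissonKernel_smul_le {g : ℂ → ℂ}
    (hg : ContinuousOn g (sphere (0:ℂ) 1)) {ε : ℝ} (h : ∀ z ∈ sphere (0:ℂ) 1, ‖g z‖ ≤ ε)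
    {w : ℂ} (hw : w ∈ ball (0:ℂ) 1) :
    ‖Real.circleAverage (poissonKernel 0 w • g) 0 1‖ ≤ ε := by
  have hP := continuousOn_poissonKernel hw
  have hone : Real.circleAverage (fun z => poissonKernel 0 w z * ε) 0 1 = ε := by
    have h1 := InnerProductSpace.HarmonicOnNhd.circleAverage_poissonKernel_smul
      (f := fun _ => ε) (c := 0) (R := 1) (w := w) 
      (InnerProductSpace.harmonicOnNhd_const ε) hw
    exact h1
  refine (norm_circleAverage_le_circleAverage_norm _ _ _).trans ?_
  rw [← hone]
  refine Real.circleAverage_mono ?_ ?_ fun z hz => ?_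
  · exact ((hP.smul hg).norm).circleIntegrable zero_le_one
  · exact (hP.mul continuousOn_const).circleIntegrable zero_le_one
  · rw [abs_one] at hz
    have hz1 : ‖z‖ = 1 := by simpa using hz
    have hw1 : ‖w‖ < 1 := by simpa using hw
    have hnn : 0 ≤ poissonKernel 0 w z := by
      rw [poissonKernel_def]
      simp only [sub_zero, hz1]
      have : ‖w‖ ^ 2 ≤ 1 := pow_le_one₀ (norm_nonneg _) hw1.le
      apply div_nonneg _ (by positivity)
      linarith
    rw [Pi.smul_apply', norm_smul, Real.norm_of_nonneg hnn]
    gcongr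
    exact h z hz

theorem circleAverage_poissonKernel_smul_polynomial (p q : Polynomial ℂ) {w : ℂ}
    (hw : w ∈ ball (0:ℂ) 1) :
    Real.circleAverage (poissonKernel 0 w • fun z => p.eval z + (starRingEnd ℂ) (q.eval z)) 0 1
      = p.eval w + (starRingEnd ℂ) (q.eval w) := by
  have hP := continuousOn_poissonKernel hw
  have hpoly : ∀ r : Polynomial ℂ,
      Real.circleAverage (poissonKernel 0 w • fun z => r.eval z) 0 1 = r.eval w := fun r =>
    DiffContOnCl.circleAverage_poissonKernel_smul (f := fun z => r.eval z)
      r.differentiable.diffContOnCl hw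
  have hint : ∀ r : Polynomial ℂ,
      CircleIntegrable (poissonKernel 0 w • fun z => r.eval z) 0 1 := fun r =>
    (hP.smul r.continuous.continuousOn).circleIntegrable zero_le_one
  have hconj := (Complex.conjCLE : ℂ →L[ℝ] ℂ).circleAverage_comp_comm (hint q)
  rw [hpoly] at hconj
  have hsplit : (poissonKernel 0 w • fun z => p.eval z + (starRingEnd ℂ) (q.eval z))
      = (poissonKernel 0 w • fun z => p.eval z) +
        ((Complex.conjCLE : ℂ →L[ℝ] ℂ) ∘ (poissonKernel 0 w • fun z => q.eval z)) := by
    ext z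
    simp
  have hint' : CircleIntegrable
      ((Complex.conjCLE : ℂ →L[ℝ] ℂ) ∘ (poissonKernel 0 w • fun z => q.eval z)) 0 1 :=
    (Complex.conjCLE.continuous.comp_continuousOn
      (hP.smul q.continuous.continuousOn)).circleIntegrable zero_le_one
  rw [hsplit, Real.circleAverage_add (hint p) hint', hconj, hpoly]
  simp

/-- If all moments `∫ zⁿ f`, `n ≥ 1`, vanish, then the conjugate Herglotz–Riesz integral of `f`
is constant. -/
theorem circleAverage_conj_herglotzRieszKernel_mul {f : ℂ → ℂ}
    (hf : ContinuousOn f (sphere (0:ℂ) 1))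
    (hmom : ∀ n : ℕ, Real.circleAverage (fun z => z ^ (n + 1) * f z) 0 1 = 0) {w : ℂ}
    (hw : w ∈ ball (0:ℂ) 1) :
    Real.circleAverage (fun z => (starRingEnd ℂ) (herglotzRieszKernel 0 w z) * f z) 0 1
      = Real.circleAverage f 0 1 := by
  have hw1 : ‖w‖ < 1 := by simpa using hw
  set v := (starRingEnd ℂ) w with hv
  have hv1 : ‖v‖ = ‖w‖ := by simp [hv]
  obtain ⟨M, hM⟩ := (isCompact_sphere (0:ℂ) 1).exists_bound_of_continuousOn hf
  have hM0 : 0 ≤ M := (norm_nonneg _).trans (hM 1 (by simp))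
  have hI : ∀ {u : ℂ → ℂ}, ContinuousOn u (sphere (0:ℂ) 1) → CircleIntegrable u 0 1 :=
    fun hu => hu.circleIntegrable zero_le_one
  have hne : ∀ z ∈ sphere (0:ℂ) 1, 1 - v * z ≠ 0 := fun z hz h0 => by
    have hz1 : ‖z‖ = 1 := by simpa using hz
    have : ‖v * z‖ = 1 := by rw [← sub_eq_zero.1 h0]; simp
    rw [norm_mul, hz1, hv1] at this
    linarith
  have hker : ∀ z ∈ sphere (0:ℂ) 1,
      (starRingEnd ℂ) (herglotzRieszKernel 0 w z) = (1 + v * z) / (1 - v * z) := fun z hz => by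
    have hz1 : ‖z‖ = 1 := by simpa using hz
    have hz0 : z ≠ 0 := by rintro rfl; simp at hz1
    have hzz : (starRingEnd ℂ) z = z⁻¹ := (Complex.inv_eq_conj hz1).symm
    rw [herglotzRieszKernel_def]
    simp only [sub_zero, map_div₀, map_add, map_sub, hzz, ← hv]
    rw [← mul_div_mul_right _ _ hz0, add_mul, sub_mul, inv_mul_cancel₀ hz0]
  have hpart : ∀ N : ℕ, Real.circleAverage
      (fun z => f z + ∑ j ∈ Finset.range N, (2 * v ^ (j + 1)) • (z ^ (j + 1) * f z)) 0 1
      = Real.circleAverage f 0 1 := fun N => by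
    rw [Real.circleAverage_fun_add (hI hf) (hI (by fun_prop)), Real.circleAverage_fun_sum]
    · simp [Real.circleAverage_fun_smul, hmom, -smul_eq_mul]
    · intro i _
      exact hI (by fun_prop)
  have hrem : ∀ N : ℕ, ∀ z ∈ sphere (0:ℂ) 1,
      (starRingEnd ℂ) (herglotzRieszKernel 0 w z) * f z
        - (f z + ∑ j ∈ Finset.range N, (2 * v ^ (j + 1)) • (z ^ (j + 1) * f z))
      = 2 * (v * z) ^ (N + 1) / (1 - v * z) * f z := fun N z hz => by
    rw [hker z hz]
    have h0 := hne z hz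
    have hs : ∑ j ∈ Finset.range N, (2 * v ^ (j + 1)) • (z ^ (j + 1) * f z)
        = 2 * (v * z) * (∑ j ∈ Finset.range N, (v * z) ^ j) * f z := by
      rw [Finset.mul_sum, Finset.sum_mul]
      refine Finset.sum_congr rfl fun j _ => ?_
      simp only [smul_eq_mul]
      ring
    have hgeom := mul_neg_geom_sum (v * z) N
    have hgeom' : ∑ j ∈ Finset.range N, (v * z) ^ j = (1 - (v * z) ^ N) / (1 - v * z) := by
      rw [eq_div_iff h0, ← hgeom, mul_comm]
    rw [hs, hgeom']
    field_simp
    ring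
  have hkerc : ContinuousOn (fun z => (starRingEnd ℂ) (herglotzRieszKernel 0 w z) * f z)
      (sphere (0:ℂ) 1) := by
    have := continuousOn_herglotzRieszKernel_sphere hw
    rw [abs_one] at this
    exact (Complex.continuous_conj.comp_continuousOn this).mul hf
  have hbound : ∀ N : ℕ,
      ‖Real.circleAverage (fun z => (starRingEnd ℂ) (herglotzRieszKernel 0 w z) * f z) 0 1
      - Real.circleAverage f 0 1‖ ≤ 2 * ‖w‖ ^ (N + 1) / (1 - ‖w‖) * M := fun N => by
    have hpc : ContinuousOn (fun z => f z + ∑ j ∈ Finset.range N,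
      (2 * v ^ (j + 1)) • (z ^ (j + 1) * f z)) (sphere (0:ℂ) 1) := by fun_prop
    rw [← hpart N, ← Real.circleAverage_fun_sub (hI hkerc) (hI hpc)]
    refine norm_circleAverage_le_of_norm_le ?_ ?_
    · rw [abs_one]
      exact hkerc.sub hpc
    · rw [abs_one]
      intro z hz
      have hz1 : ‖z‖ = 1 := by simpa using hz
      rw [hrem N z hz]
      simp only [norm_mul, norm_div, norm_pow, hv1, hz1, mul_one, Complex.norm_ofNat]
      have h1 : 1 - ‖w‖ ≤ ‖1 - v * z‖ := by
        have := norm_sub_norm_le 1 (v * z)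
        rwa [norm_one, norm_mul, hv1, hz1, mul_one] at this
      have h2 : 0 < 1 - ‖w‖ := by linarith
      gcongr
      exact hM z hz
  have hlim : Filter.Tendsto (fun N : ℕ => 2 * ‖w‖ ^ (N + 1) / (1 - ‖w‖) * M) Filter.atTop
      (nhds 0) := by
    have := ((((tendsto_pow_atTop_nhds_zero_of_lt_one (norm_nonneg w) hw1).comp
      (Filter.tendsto_add_atTop_nat 1)).const_mul 2).div_const (1 - ‖w‖)).mul_const M
    simpa using this
  have := ge_of_tendsto' hlim hbound
  exact sub_eq_zero.1 (norm_le_zero_iff.1 this)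

theorem circleAverage_poissonKernel_smul_eq {f : ℂ → ℂ}
    (hf : ContinuousOn f (sphere (0:ℂ) 1))
    (hmom : ∀ n : ℕ, Real.circleAverage (fun z => z ^ (n + 1) * f z) 0 1 = 0) {w : ℂ}
    (hw : w ∈ ball (0:ℂ) 1) :
    Real.circleAverage (poissonKernel 0 w • f) 0 1
      = (1 / 2 : ℂ) * (Real.circleAverage (fun z => herglotzRieszKernel 0 w z • f z) 0 1
        + Real.circleAverage f 0 1) := by
  have hH := continuousOn_herglotzRieszKernel_sphere hw
  rw [abs_one] at hH
  have h1 : CircleIntegrable (fun z => herglotzRieszKernel 0 w z • f z) 0 1 :=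
    (hH.smul hf).circleIntegrable zero_le_one
  have h2 : CircleIntegrable
      (fun z => (starRingEnd ℂ) (herglotzRieszKernel 0 w z) * f z) 0 1 :=
    ((Complex.continuous_conj.comp_continuousOn hH).mul hf).circleIntegrable zero_le_one
  rw [← circleAverage_conj_herglotzRieszKernel_mul hf hmom hw, ← Real.circleAverage_fun_add h1 h2,
    ← smul_eq_mul, ← Real.circleAverage_fun_smul]
  congr 1
  ext z
  rw [poissonKernel_eq_re_herglotzRieszKernel]
  simp only [Pi.smul_apply', Function.comp_apply, Complex.real_smul, smul_eq_mul,
    Complex.re_eq_add_conj]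
  ring

/-- A continuous function on the circle all of whose moments `∫ zⁿ f`, `n ≥ 1`, vanish extends
holomorphically through the disc. -/
theorem extendsHolo_of_circleAverage_pow_mul_eq_zero {f : ℂ → ℂ}
    (hf : ContinuousOn f (sphere (0:ℂ) 1))
    (hmom : ∀ n : ℕ, Real.circleAverage (fun z => z ^ (n + 1) * f z) 0 1 = 0) :
    ExtendsHolo f := by
  let F : ℂ → ℂ := fun w =>
    if w ∈ ball (0:ℂ) 1 then Real.circleAverage (poissonKernel 0 w • f) 0 1 else f w
  have hFs : ∀ z ∈ sphere (0:ℂ) 1, F z = f z := fun z hz => by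
    have : ‖z‖ = 1 := by simpa using hz
    simp [F, this]
  refine ⟨F, ?_, ?_, hFs⟩
  · refine continuousOn_of_uniform_approx_of_continuousOn fun u hu => ?_
    obtain ⟨ε, hε, hεu⟩ := Metric.mem_uniformity_dist.1 hu
    obtain ⟨p, q, hpq⟩ := exists_polynomial_add_conj_near hf (half_pos hε)
    have hTc : Continuous fun z : ℂ => p.eval z + (starRingEnd ℂ) (q.eval z) :=
      p.continuous.add (Complex.continuous_conj.comp q.continuous)
    refine ⟨fun z => p.eval z + (starRingEnd ℂ) (q.eval z), hTc.continuousOn, fun w hw => hεu ?_⟩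
    rw [dist_eq_norm]
    by_cases hwb : w ∈ ball (0:ℂ) 1
    · have hP := continuousOn_poissonKernel hwb
      simp only [F, hwb, if_true]
      rw [← circleAverage_poissonKernel_smul_polynomial p q hwb, ← Real.circleAverage_sub
        ((hP.smul hf).circleIntegrable zero_le_one)
        ((hP.smul hTc.continuousOn).circleIntegrable zero_le_one), ← smul_sub]
      refine (norm_circleAverage_poissonKernel_smul_le (hf.sub hTc.continuousOn)
        (fun z hz => (hpq z hz).le) hwb).trans_lt (half_lt_self hε)
    · have hws : w ∈ sphere (0:ℂ) 1 := by
        simp only [mem_ball, mem_closedBall, mem_sphere] at *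
        linarith
      rw [hFs w hws]
      exact (hpq w hws).trans (half_lt_self hε)
  · have hd := differentiableOn_circleAverage_herglotzRieszKernel_smul
      (hf.circleIntegrable zero_le_one)
    refine ((hd.add_const (Real.circleAverage f 0 1)).const_mul (1 / 2 : ℂ)).congr fun w hw => ?_
    simp only [F, hw, if_true]
    exact circleAverage_poissonKernel_smul_eq hf hmom hw

theorem stmt5 (f : ℂ → ℂ) (hf : ContinuousOn f (sphere (0:ℂ) 1))
    (h : ∀ P : Polynomial ℂ, (∀ z ∈ sphere (0:ℂ) 1, f z + P.eval z ≠ 0) →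
      ∀ n : ℤ, HasWindingNumber (fun z => f z + P.eval z) n → 0 ≤ n) :
    ExtendsHolo f := by
  have hzero : ∀ a : ℂ, ‖a‖ ≤ 1 / 2 → ∀ k : ℕ,
      Real.circleAverage (fun z => z * (1 + a * z ^ k) * f z) 0 1 = 0 := fun a ha k => by
    by_contra hA
    obtain ⟨P, hP, hwind⟩ := exists_polynomial_hasWindingNumber_neg_one hf ha k hA
    exact absurd (h P hP _ hwind) (by norm_num)
  refine extendsHolo_of_circleAverage_pow_mul_eq_zero hf fun n => ?_
  have h0 := hzero 0 (by simp) 0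
  have h1 := hzero (1 / 2) (by norm_num) n
  have hsplit : (fun z : ℂ => z * (1 + 1 / 2 * z ^ n) * f z)
      = fun z => z * (1 + 0 * z ^ 0) * f z + (1 / 2 : ℂ) • (z ^ (n + 1) * f z) := by
    ext z
    simp only [smul_eq_mul]
    ring
  rw [hsplit, Real.circleAverage_fun_add
    (ContinuousOn.circleIntegrable zero_le_one (by fun_prop))
    (ContinuousOn.circleIntegrable zero_le_one (by fun_prop)), h0,
    Real.circleAverage_fun_smul] at h1
  simpa using h1
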